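/- Let 1 < α < 2, A a bounded operator on a Banach space E, u₀ ∈ E, and F : [0,∞) → E continuous. Then u(t) = E_α(t^α A) u₀ + ∫_0^t (t-τ)^{α-1} E_{α,α}((t-τ)^α A) F(τ) dτ satisfies the integral equation u(t) = u₀ + (1/Γ(α)) ∫_0^t (t-τ)^{α-1} (A u(τ) + F(τ)) dτ for all t ≥ 0. -/

import Mathlib

open Real MeasureTheory intervalIntegral

/-- Operator-valued two-parameter Mittag-Leffler function. -/
noncomputable def opML {E : Type*} [NormedAddCommGroup E] [NormedSpace ℝ E]
    (α β : ℝ) (A : E →L[ℝ] E) (t : ℝ) : E →L[ℝ] E :=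
  ∑' n : ℕ, (t ^ ((n : ℝ) * α) / Real.Gamma (β + n * α)) • A ^ n

/-- The Riemann–Liouville kernel `t₊ ^ (β - 1) / Γ(β)`, extended to negative times by clamping. -/
noncomputable def rlKernel (β t : ℝ) : ℝ :=
  max t 0 ^ (β - 1) / Real.Gamma β

lemma rlKernel_of_nonneg {β t : ℝ} (ht : 0 ≤ t) :
    rlKernel β t = t ^ (β - 1) / Real.Gamma β := by
  rw [rlKernel, max_eq_left ht]

lemma rlKernel_of_nonpos {β t : ℝ} (hβ : 1 < β) (ht : t ≤ 0) : rlKernel β t = 0 := by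
  rw [rlKernel, max_eq_right ht, Real.zero_rpow (by linarith), zero_div]

lemma rlKernel_one (t : ℝ) : rlKernel 1 t = 1 := by
  simp [rlKernel]

lemma continuous_rlKernel {β : ℝ} (hβ : 1 ≤ β) : Continuous (rlKernel β) :=
  ((continuous_id.max continuous_const).rpow_const fun _ => Or.inr (by linarith)).div_const _

lemma rlKernel_nonneg {β : ℝ} (hβ : 1 ≤ β) (t : ℝ) : 0 ≤ rlKernel β t :=
  div_nonneg (Real.rpow_nonneg (le_max_right _ _) _) (Real.Gamma_pos_of_pos (by linarith)).le

lemma rlKernel_mono {β : ℝ} (hβ : 1 ≤ β) : Monotone (rlKernel β) := fun s t h => by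
  have := Real.Gamma_pos_of_pos (show 0 < β by linarith)
  unfold rlKernel
  gcongr

/-- Semigroup property of the Riemann–Liouville kernels. -/
lemma integral_rlKernel_mul_rlKernel {α β t : ℝ} (hα : 1 ≤ α) (hβ : 1 ≤ β) (ht : 0 ≤ t) :
    ∫ τ in (0:ℝ)..t, rlKernel α (t - τ) * rlKernel β τ = rlKernel (α + β) t := by
  rcases ht.eq_or_lt with rfl | ht
  · rw [intervalIntegral.integral_same, rlKernel_of_nonpos (by linarith) le_rfl]
  have hΓα := (Real.Gamma_pos_of_pos (show 0 < α by linarith)).ne'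
  have hΓβ := (Real.Gamma_pos_of_pos (show 0 < β by linarith)).ne'
  have hbeta : ∫ τ in (0:ℝ)..t, τ ^ (β - 1) * (t - τ) ^ (α - 1) =
      t ^ (β + α - 1) * (Real.Gamma β * Real.Gamma α / Real.Gamma (β + α)) := by
    have h := Complex.betaIntegral_scaled β α ht
    rw [Complex.betaIntegral_eq_Gamma_mul_div _ _ (by simp; linarith) (by simp; linarith)] at h
    rw [← Complex.ofReal_add, Complex.Gamma_ofReal, Complex.Gamma_ofReal, Complex.Gamma_ofReal] at h
    apply Complex.ofReal_injective
    rw [← intervalIntegral.integral_ofReal]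
    push_cast
    rw [Complex.ofReal_cpow ht.le]
    push_cast
    push_cast at h
    rw [← h]
    refine intervalIntegral.integral_congr fun τ hτ => ?_
    rw [Set.uIcc_of_le ht.le] at hτ
    rw [Complex.ofReal_cpow hτ.1, Complex.ofReal_cpow (sub_nonneg.2 hτ.2)]
    push_cast
    rfl
  have hcongr : ∫ τ in (0:ℝ)..t, rlKernel α (t - τ) * rlKernel β τ =
      ∫ τ in (0:ℝ)..t, (Real.Gamma α * Real.Gamma β)⁻¹ * (τ ^ (β - 1) * (t - τ) ^ (α - 1)) := by
    refine intervalIntegral.integral_congr fun τ hτ => ?_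
    rw [Set.uIcc_of_le ht.le] at hτ
    rw [rlKernel_of_nonneg hτ.1, rlKernel_of_nonneg (sub_nonneg.2 hτ.2)]
    field_simp
  rw [hcongr, intervalIntegral.integral_const_mul, hbeta, rlKernel_of_nonneg ht.le, add_comm β α]
  field_simp

section

variable {E : Type*} [NormedAddCommGroup E] [NormedSpace ℝ E]

lemma summable_rlKernel_mul_norm_pow {α β : ℝ} (hα : 1 < α) (hβ : 1 ≤ β) (A : E →L[ℝ] E)
    {t : ℝ} (ht : 0 ≤ t) :
    Summable fun n : ℕ => rlKernel (β + n * α) t * ‖A ^ n‖ := by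
  have hs : Summable fun n : ℕ => t ^ (β - 1) * ((t ^ α * ‖A‖) ^ n / n.factorial) :=
    (Real.summable_pow_div_factorial _).mul_left _
  refine hs.of_norm_bounded_eventually_nat ?_
  filter_upwards [Filter.eventually_ge_atTop 1] with n hn
  have hn' : (1:ℝ) ≤ n := by exact_mod_cast hn
  have hnα : (n : ℝ) ≤ n * α := by nlinarith
  have hΓ : (n.factorial : ℝ) ≤ Real.Gamma (β + n * α) := by
    rw [← Real.Gamma_nat_eq_factorial]
    exact Real.Gamma_strictMonoOn_Ici.monotoneOn (by simp; linarith) (by simp; linarith)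
      (by linarith)
  rw [Real.norm_of_nonneg (mul_nonneg (rlKernel_nonneg (by linarith) _) (norm_nonneg _)),
    rlKernel_of_nonneg ht, mul_pow, ← Real.rpow_natCast (t ^ α), ← Real.rpow_mul ht,
    show β + n * α - 1 = (β - 1) + α * n by ring,
    Real.rpow_add_of_nonneg ht (by linarith) (by nlinarith)]
  calc _ ≤ t ^ (β - 1) * t ^ (α * n) / n.factorial * ‖A‖ ^ n := by
        gcongr
        exact norm_pow_le' A hn
    _ = _ := by ring

/-- The kernel `t₊ ^ (β - 1) E_{α,β}(t₊ ^ α A)`. -/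
noncomputable def mlKernel (α β : ℝ) (A : E →L[ℝ] E) (t : ℝ) : E →L[ℝ] E :=
  ∑' n : ℕ, rlKernel (β + n * α) t • A ^ n

lemma one_le_add_nat_mul {α β : ℝ} (hα : 1 < α) (hβ : 1 ≤ β) (n : ℕ) : 1 ≤ β + n * α := by
  have : 0 ≤ n * α := by positivity
  linarith

lemma norm_rlKernel_smul_pow_le {α β : ℝ} (hα : 1 < α) (hβ : 1 ≤ β) (A : E →L[ℝ] E)
    {t T : ℝ} (ht : t ≤ T) (n : ℕ) :
    ‖rlKernel (β + n * α) t • A ^ n‖ ≤ rlKernel (β + n * α) T * ‖A ^ n‖ := by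
  have h1 := one_le_add_nat_mul hα hβ n
  rw [norm_smul, Real.norm_of_nonneg (rlKernel_nonneg h1 t)]
  gcongr
  exact rlKernel_mono h1 ht

lemma mlKernel_of_nonneg {α β : ℝ} (hα : 1 < α) (hβ : 1 ≤ β) (A : E →L[ℝ] E) {t : ℝ}
    (ht : 0 ≤ t) : mlKernel α β A t = t ^ (β - 1) • opML α β A t := by
  rcases eq_or_ne (t ^ (β - 1)) 0 with h0 | h0
  · rw [h0, zero_smul, mlKernel]
    convert tsum_zero with n
    rw [rlKernel_of_nonneg ht, show β + n * α - 1 = (β - 1) + n * α by ring,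
      Real.rpow_add_of_nonneg ht (by linarith) (by positivity), h0, zero_mul, zero_div, zero_smul]
  · rw [opML, ← tsum_const_smul'' (t ^ (β - 1)), mlKernel]
    congr 1 with n : 1
    rw [rlKernel_of_nonneg ht, show β + n * α - 1 = (β - 1) + n * α by ring,
      Real.rpow_add_of_nonneg ht (by linarith) (by positivity), smul_smul, mul_div_assoc]

lemma mlKernel_of_nonpos {α β : ℝ} (hα : 1 < α) (hβ : 1 < β) (A : E →L[ℝ] E) {t : ℝ}
    (ht : t ≤ 0) : mlKernel α β A t = 0 := by
  rw [mlKernel]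
  convert tsum_zero with n
  have : 0 ≤ n * α := by positivity
  rw [rlKernel_of_nonpos (by linarith) ht, zero_smul]

variable [CompleteSpace E]

lemma hasSum_mlKernel {α β : ℝ} (hα : 1 < α) (hβ : 1 ≤ β) (A : E →L[ℝ] E) (t : ℝ) :
    HasSum (fun n : ℕ => rlKernel (β + n * α) t • A ^ n) (mlKernel α β A t) :=
  ((summable_rlKernel_mul_norm_pow hα hβ A (le_max_right t 0)).of_norm_bounded
    fun n => norm_rlKernel_smul_pow_le hα hβ A (le_max_left t 0) n).hasSum

lemma continuous_mlKernel {α β : ℝ} (hα : 1 < α) (hβ : 1 ≤ β) (A : E →L[ℝ] E) :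
    Continuous (mlKernel α β A) := by
  rw [continuous_iff_continuousAt]
  intro t
  have hon : ContinuousOn (mlKernel α β A) (Set.Iic (max (t + 1) 0)) :=
    continuousOn_tsum
      (fun n => ((continuous_rlKernel (one_le_add_nat_mul hα hβ n)).smul
        continuous_const).continuousOn)
      (summable_rlKernel_mul_norm_pow hα hβ A (le_max_right (t + 1) 0))
      fun n _ hx => norm_rlKernel_smul_pow_le hα hβ A hx n
  exact hon.continuousAt (Iic_mem_nhds (lt_max_of_lt_left (by linarith)))

/-- The Volterra resolvent equation for the Mittag-Leffler kernel. -/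
lemma integral_rlKernel_smul_mlKernel {α β t : ℝ} (hα : 1 < α) (hβ : 1 ≤ β)
    (A : E →L[ℝ] E) (ht : 0 ≤ t) :
    ∫ τ in (0:ℝ)..t, rlKernel α (t - τ) • (A * mlKernel α β A τ) =
      mlKernel α β A t - rlKernel β t • 1 := by
  have hint : HasSum (fun n : ℕ => ∫ τ in (0:ℝ)..t,
      rlKernel α (t - τ) • (A * (rlKernel (β + n * α) τ • A ^ n)))
      (∫ τ in (0:ℝ)..t, rlKernel α (t - τ) • (A * mlKernel α β A τ)) := by
    have hsum := (summable_rlKernel_mul_norm_pow hα hβ A ht).mul_left (rlKernel α t * ‖A‖)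
    refine intervalIntegral.hasSum_integral_of_dominated_convergence
      (fun n _ => rlKernel α t * ‖A‖ * (rlKernel (β + n * α) t * ‖A ^ n‖)) ?_ ?_ ?_ ?_ ?_
    · intro n
      have h1 := continuous_rlKernel hα.le
      have h2 := continuous_rlKernel (one_le_add_nat_mul hα hβ n)
      exact Continuous.aestronglyMeasurable (by fun_prop)
    · refine fun n => ae_of_all _ fun τ hτ => ?_
      rw [Set.uIoc_of_le ht] at hτ
      rw [norm_smul, Real.norm_of_nonneg (rlKernel_nonneg hα.le _), mul_assoc]
      gcongr
      · exact rlKernel_nonneg hα.le _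
      · exact rlKernel_mono hα.le (by linarith [hτ.1])
      · refine (norm_mul_le _ _).trans ?_
        gcongr
        exact norm_rlKernel_smul_pow_le hα hβ A hτ.2 n
    · exact ae_of_all _ fun _ _ => hsum
    · exact intervalIntegrable_const
    · exact ae_of_all _ fun τ _ => ((hasSum_mlKernel hα hβ A τ).mul_left A).const_smul _
  have hterm (n : ℕ) : ∫ τ in (0:ℝ)..t,
      rlKernel α (t - τ) • (A * (rlKernel (β + n * α) τ • A ^ n)) =
      rlKernel (β + (n + 1 : ℕ) * α) t • A ^ (n + 1) := by
    simp_rw [mul_smul_comm, smul_smul, ← pow_succ']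
    rw [intervalIntegral.integral_smul_const,
      integral_rlKernel_mul_rlKernel hα.le (one_le_add_nat_mul hα hβ n) ht]
    congr 2
    push_cast
    ring
  simp_rw [hterm] at hint
  have hshift := (hasSum_nat_add_iff' 1).2 (hasSum_mlKernel hα hβ A t)
  simpa using hint.unique hshift

lemma integral_rlKernel_smul_mlKernel_sub {α s t : ℝ} (hα : 1 < α) (A : E →L[ℝ] E)
    (hs : 0 ≤ s) (hst : s ≤ t) :
    ∫ τ in (0:ℝ)..t, rlKernel α (t - τ) • (A * mlKernel α α A (τ - s)) =
      mlKernel α α A (t - s) - rlKernel α (t - s) • 1 := by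
  have h1 := continuous_rlKernel hα.le
  have h2 := continuous_mlKernel hα hα.le A
  have hcont : Continuous fun τ => rlKernel α (t - τ) • (A * mlKernel α α A (τ - s)) := by
    fun_prop
  rw [← intervalIntegral.integral_add_adjacent_intervals (hcont.intervalIntegrable 0 s)
    (hcont.intervalIntegrable s t)]
  have hzero : ∫ τ in (0:ℝ)..s, rlKernel α (t - τ) • (A * mlKernel α α A (τ - s)) = 0 := by
    rw [intervalIntegral.integral_congr (g := fun _ => 0), intervalIntegral.integral_zero]
    intro τ hτ
    rw [Set.uIcc_of_le hs] at hτ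
    simp [mlKernel_of_nonpos hα hα A (sub_nonpos.2 hτ.2)]
  rw [hzero, zero_add, ← integral_rlKernel_smul_mlKernel hα hα.le A (sub_nonneg.2 hst)]
  have := intervalIntegral.integral_comp_sub_right (a := s) (b := t)
    (fun τ => rlKernel α (t - s - τ) • (A * mlKernel α α A τ)) s
  simpa using this

/-- Fubini form of the resolvent equation applied to a forcing term. -/
lemma integral_rlKernel_smul_integral_mlKernel {α t : ℝ} (hα : 1 < α) (A : E →L[ℝ] E)
    {F : ℝ → E} (hF : Continuous F) (ht : 0 ≤ t) :
    ∫ τ in (0:ℝ)..t, rlKernel α (t - τ) • A (∫ s in (0:ℝ)..t, mlKernel α α A (τ - s) (F s)) =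
      (∫ s in (0:ℝ)..t, mlKernel α α A (t - s) (F s)) -
        ∫ s in (0:ℝ)..t, rlKernel α (t - s) • F s := by
  have h1 := continuous_rlKernel hα.le
  have h2 := continuous_mlKernel hα hα.le A
  have hinner (τ : ℝ) :
      rlKernel α (t - τ) • A (∫ s in (0:ℝ)..t, mlKernel α α A (τ - s) (F s)) =
      ∫ s in (0:ℝ)..t, (rlKernel α (t - τ) • (A * mlKernel α α A (τ - s))) (F s) := by
    rw [← A.intervalIntegral_comp_comm (Continuous.intervalIntegrable (by fun_prop) _ _),
      ← intervalIntegral.integral_smul]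
    rfl
  simp_rw [hinner]
  rw [intervalIntegral_intervalIntegral_swap]
  · rw [← intervalIntegral.integral_sub (Continuous.intervalIntegrable (by fun_prop) _ _)
      (Continuous.intervalIntegrable (by fun_prop) _ _)]
    refine intervalIntegral.integral_congr fun s hs => ?_
    rw [Set.uIcc_of_le ht] at hs
    rw [← ContinuousLinearMap.intervalIntegral_apply
        (Continuous.intervalIntegrable (by fun_prop) _ _),
      integral_rlKernel_smul_mlKernel_sub hα A hs.1 hs.2]
    simp
  · have hcont : Continuous (Function.uncurry fun τ s : ℝ =>
        (rlKernel α (t - τ) • (A * mlKernel α α A (τ - s))) (F s)) := by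
      unfold Function.uncurry
      fun_prop
    exact (hcont.continuousOn.integrableOn_compact (isCompact_uIcc.prod isCompact_uIcc)).mono_set
      (Set.prod_mono Set.uIoc_subset_uIcc Set.uIoc_subset_uIcc)

lemma integral_mlKernel_sub_eq {α t τ : ℝ} (hα : 1 < α) (A : E →L[ℝ] E)
    {F : ℝ → E} (hF : Continuous F) (hτ : 0 ≤ τ) (hτt : τ ≤ t) :
    ∫ s in (0:ℝ)..τ, (τ - s) ^ (α - 1) • opML α α A (τ - s) (F s) =
      ∫ s in (0:ℝ)..t, mlKernel α α A (τ - s) (F s) := by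
  have h2 := continuous_mlKernel hα hα.le A
  have hcont : Continuous fun s => mlKernel α α A (τ - s) (F s) := by fun_prop
  rw [← intervalIntegral.integral_add_adjacent_intervals (hcont.intervalIntegrable 0 τ)
    (hcont.intervalIntegrable τ t)]
  have hzero : ∫ s in τ..t, mlKernel α α A (τ - s) (F s) = 0 := by
    rw [intervalIntegral.integral_congr (g := fun _ => 0), intervalIntegral.integral_zero]
    intro s hs
    rw [Set.uIcc_of_le hτt] at hs
    simp [mlKernel_of_nonpos hα hα A (sub_nonpos.2 hs.1)]
  rw [hzero, add_zero]
  refine intervalIntegral.integral_congr fun s hs => ?_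
  rw [Set.uIcc_of_le hτ] at hs
  simp [mlKernel_of_nonneg hα hα.le A (sub_nonneg.2 hs.2)]

end

/-- Variation-of-constants (Duhamel) formula: for `1 < α < 2`, bounded `A`, `u₀ ∈ E` and
continuous `F`, the function
`u(t) = E_α(t^α A) u₀ + ∫_0^t (t-τ)^{α-1} E_{α,α}((t-τ)^α A) F(τ) dτ` satisfies
`u(t) = u₀ + (1/Γ(α)) ∫_0^t (t-τ)^{α-1} (A u(τ) + F(τ)) dτ` for all `t ≥ 0`. -/
theorem duhamel_integral_equation {E : Type*} [NormedAddCommGroup E] [NormedSpace ℝ E]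
    [CompleteSpace E]
    (α : ℝ) (hα₁ : 1 < α) (hα₂ : α < 2) (A : E →L[ℝ] E) (u₀ : E)
    (F : ℝ → E) (hF : Continuous F)
    (u : ℝ → E)
    (hu : ∀ t : ℝ, u t = opML α 1 A t u₀
        + ∫ τ in (0:ℝ)..t, (t - τ) ^ (α - 1) • opML α α A (t - τ) (F τ)) :
    ∀ t ≥ (0 : ℝ),
      u t = u₀ + (1 / Real.Gamma α) •
        ∫ τ in (0:ℝ)..t, (t - τ) ^ (α - 1) • (A (u τ) + F τ) := by
  intro t ht
  have h1 := continuous_rlKernel hα₁.le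
  have h2 := continuous_mlKernel hα₁ hα₁.le A
  have h3 := continuous_mlKernel hα₁ le_rfl A
  have hu' : ∀ τ, 0 ≤ τ → τ ≤ t →
      u τ = mlKernel α 1 A τ u₀ + ∫ s in (0:ℝ)..t, mlKernel α α A (τ - s) (F s) := by
    intro τ hτ hτt
    rw [hu, integral_mlKernel_sub_eq hα₁ A hF hτ hτt, mlKernel_of_nonneg hα₁ le_rfl A hτ]
    simp
  have hparam : Continuous fun τ => ∫ s in (0:ℝ)..t, mlKernel α α A (τ - s) (F s) :=
    intervalIntegral.continuous_parametric_intervalIntegral_of_continuous'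
      (by unfold Function.uncurry; fun_prop) _ _
  have hrhs : (1 / Real.Gamma α) • ∫ τ in (0:ℝ)..t, (t - τ) ^ (α - 1) • (A (u τ) + F τ) =
      ∫ τ in (0:ℝ)..t, ((rlKernel α (t - τ) • (A * mlKernel α 1 A τ)) u₀ +
        rlKernel α (t - τ) • A (∫ s in (0:ℝ)..t, mlKernel α α A (τ - s) (F s)) +
        rlKernel α (t - τ) • F τ) := by
    rw [← intervalIntegral.integral_smul]
    refine intervalIntegral.integral_congr fun τ hτ => ?_
    rw [Set.uIcc_of_le ht] at hτ
    rw [hu' τ hτ.1 hτ.2, smul_smul, one_div_mul_eq_div, ← rlKernel_of_nonneg (sub_nonneg.2 hτ.2)]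
    simp
  rw [hrhs, intervalIntegral.integral_add (Continuous.intervalIntegrable (by fun_prop) _ _)
      (Continuous.intervalIntegrable (by fun_prop) _ _),
    intervalIntegral.integral_add (Continuous.intervalIntegrable (by fun_prop) _ _)
      (Continuous.intervalIntegrable (by fun_prop) _ _),
    integral_rlKernel_smul_integral_mlKernel hα₁ A hF ht,
    ← ContinuousLinearMap.intervalIntegral_apply
      (Continuous.intervalIntegrable (by fun_prop) _ _),
    integral_rlKernel_smul_mlKernel hα₁ le_rfl A ht, hu' t ht le_rfl, rlKernel_one]
  simp
  abel
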